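/- Let n ≥ 1, let U ⊆ ℝⁿ be open, and let F : U → ℝ be differentiable with locally Lipschitz derivative (i.e., F is of class C^{1,1}_loc). Suppose F attains a local minimum at z₀ ∈ U. Let a : U → (symmetric n×n real matrices) be continuously differentiable with a(z₀) positive definite. Then there exists a sequence of points z_j ∈ U with: (i) z_j → z₀ as j → ∞; (ii) the gradient ∇F is differentiable at each z_j, with derivative matrix D²F(z_j); (iii) liminf_{j → ∞} Σ_{i,l} a_{il}(z_j)·(D²F(z_j))_{il} ≥ 0; and (iv) ∇F(z_j) → 0 as j → ∞. -/

import Mathlib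

open RealInnerProductSpace Filter

/-!
Tilting `F + (ε / 2) ‖· - z₀‖²` by a linear functional of small slope `p` leaves a local minimum
near `z₀`, where the gradient `x ↦ G x + ε (x - z₀)` takes the value `p`. Hence this Lipschitz map
sends the contact points onto a ball of slopes. By Rademacher's theorem it sends the points where
`G` is not differentiable to a null set, so some contact point is a point of differentiability, and
there `DG + ε ≥ 0` by the second derivative test. As `‖DG‖` is bounded by the Lipschitz constant,
letting `ε → 0` along a subsequence gives Hessians converging to a positive semidefinite `H₀`, and
the limit `tr (H₀ a(z₀))` of the sums is nonnegative.
-/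

section

open Metric MeasureTheory Topology

lemma deriv_deriv_nonneg_of_isLocalMin {φ : ℝ → ℝ} {t : ℝ} (hmin : IsLocalMin φ t)
    (hcont : ContinuousAt φ t) : 0 ≤ deriv (deriv φ) t := by
  by_contra! hneg
  have hmax : IsLocalMax φ t := isLocalMax_of_deriv_deriv_neg hneg hmin.deriv_eq_zero hcont
  have hconst : φ =ᶠ[𝓝 t] fun _ => φ t := by
    filter_upwards [hmin, hmax] with s hge hle using le_antisymm hle hge
  have hderiv : deriv φ =ᶠ[𝓝 t] fun _ => 0 := by simpa using hconst.deriv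
  simp [hderiv.deriv_eq] at hneg

lemma isClosed_setOf_isPositive {𝕜 V : Type*} [RCLike 𝕜] [NormedAddCommGroup V]
    [InnerProductSpace 𝕜 V] : IsClosed {T : V →L[𝕜] V | T.IsPositive} := by
  simp only [ContinuousLinearMap.isPositive_def, LinearMap.IsSymmetric, Set.ofPred_and,
    Set.ofPred_forall, ContinuousLinearMap.coe_coe, ContinuousLinearMap.reApplyInnerSelf]
  refine .inter (isClosed_iInter fun x => isClosed_iInter fun y => ?_)
    (isClosed_iInter fun x => ?_)
  · exact isClosed_eq (by fun_prop) (by fun_prop)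
  · exact isClosed_le (by fun_prop) (by fun_prop)

/-- Rademacher's theorem applies because this Hausdorff measure is a Haar measure on `V`. -/
lemma hausdorffMeasure_image_setOf_not_differentiableWithinAt_eq_zero {V W X : Type*}
    [NormedAddCommGroup V] [NormedSpace ℝ V] [FiniteDimensional ℝ V]
    [MeasurableSpace V] [BorelSpace V]
    [NormedAddCommGroup W] [NormedSpace ℝ W] [FiniteDimensional ℝ W]
    [EMetricSpace X] [MeasurableSpace X] [BorelSpace X]
    {f : V → W} {g : V → X} {s : Set V} {C D : NNReal}
    (hf : LipschitzOnWith C f s) (hg : LipschitzOnWith D g s) :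
    μH[Module.finrank ℝ V] (g '' {x ∈ s | ¬DifferentiableWithinAt ℝ f s x}) = 0 := by
  have hnull : μH[Module.finrank ℝ V] {x ∈ s | ¬DifferentiableWithinAt ℝ f s x} = 0 := by
    simpa [ae_iff] using hf.ae_differentiableWithinAt_of_mem (μ := μH[Module.finrank ℝ V])
  have himage := (hg.mono (Set.sep_subset s fun x => ¬DifferentiableWithinAt ℝ f s x)
    ).hausdorffMeasure_image_le (d := Module.finrank ℝ V) (by positivity)
  simpa [hnull] using himage

variable {E : Type*} [NormedAddCommGroup E] [InnerProductSpace ℝ E]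

section Gradient

variable [CompleteSpace E] {f : E → ℝ} {g : E → E} {x : E}

lemma eq_zero_of_isLocalMin_of_hasGradientAt {v : E} (hmin : IsLocalMin f x)
    (hf : HasGradientAt f v x) : v = 0 := by
  simpa using hmin.hasFDerivAt_eq_zero hf.hasFDerivAt

lemma hasGradientAt_sub_inner {v : E} (hf : HasGradientAt f v x) (p : E) :
    HasGradientAt (fun y => f y - ⟪p, y⟫) (v - p) x := by
  rw [hasGradientAt_iff_hasFDerivAt, map_sub]
  exact hf.hasFDerivAt.sub (innerSL ℝ p).hasFDerivAt

lemma hasGradientAt_add_half_mul_norm_sub_sq {v : E} (hf : HasGradientAt f v x) (ε : ℝ)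
    (z : E) : HasGradientAt (fun y => f y + ε / 2 * ‖y - z‖ ^ 2) (v + ε • (x - z)) x := by
  have hsq := ((hasFDerivAt_id x).sub_const z).norm_sq.const_mul (ε / 2)
  refine (hf.hasFDerivAt.add hsq).congr_fderiv ?_
  ext w
  simp only [id_eq, map_add, map_sub, map_smul, add_apply, sub_apply, smul_apply, smul_eq_mul,
    nsmul_eq_mul, Nat.cast_ofNat, ContinuousLinearMap.comp_id, coe_innerSL_apply,
    InnerProductSpace.toDual_apply_apply]
  ring

lemma isSymmetric_of_hasFDerivAt_gradient {L : E →L[ℝ] E}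
    (hf : ∀ᶠ y in 𝓝 x, HasGradientAt f (g y) y) (hL : HasFDerivAt g L x) :
    (L : E →ₗ[ℝ] E).IsSymmetric := by
  intro v w
  have hdual : HasFDerivAt (fun y => innerSL ℝ (g y)) ((innerSL ℝ).comp L) x :=
    (innerSL ℝ).hasFDerivAt.comp x hL
  have hsymm := second_derivative_symmetric_of_eventually
    (hf.mono fun y hy => hy.hasFDerivAt) hdual v w
  simpa [real_inner_comm v] using hsymm

lemma inner_nonneg_of_isLocalMin_of_hasFDerivAt_gradient {L : E →L[ℝ] E}
    (hmin : IsLocalMin f x) (hf : ∀ᶠ y in 𝓝 x, HasGradientAt f (g y) y)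
    (hL : HasFDerivAt g L x) (v : E) : 0 ≤ ⟪L v, v⟫ := by
  have hline (t : ℝ) : HasDerivAt (fun t : ℝ => x + t • v) v t := by
    simpa using ((hasDerivAt_id t).smul_const v).const_add x
  have htendsto : Tendsto (fun t : ℝ => x + t • v) (𝓝 0) (𝓝 x) := by
    simpa using (hline 0).continuousAt.tendsto
  have hderiv : ∀ᶠ t in 𝓝 (0 : ℝ),
      HasDerivAt (fun t : ℝ => f (x + t • v)) ⟪g (x + t • v), v⟫ t := by
    filter_upwards [htendsto.eventually hf] with t ht
    simpa [Function.comp_def] using ht.hasFDerivAt.comp_hasDerivAt t (hline t)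
  have hderiv₂ : HasDerivAt (fun t : ℝ => ⟪g (x + t • v), v⟫) ⟪L v, v⟫ 0 := by
    have hL₀ : HasFDerivAt g L (x + (0 : ℝ) • v) := by simpa using hL
    simpa using (hL₀.comp_hasDerivAt (0 : ℝ) (hline 0)).inner ℝ (hasDerivAt_const (0 : ℝ) v)
  have hmin₀ : IsLocalMin (fun t : ℝ => f (x + t • v)) 0 := by
    filter_upwards [htendsto.eventually hmin] with t ht
    simpa using ht
  have hnonneg := deriv_deriv_nonneg_of_isLocalMin hmin₀ hderiv.self_of_nhds.continuousAt
  rwa [EventuallyEq.deriv_eq (hderiv.mono fun t ht => ht.deriv), hderiv₂.deriv] at hnonneg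

lemma isPositive_of_isLocalMin_of_hasFDerivAt_gradient {L : E →L[ℝ] E}
    (hmin : IsLocalMin f x) (hf : ∀ᶠ y in 𝓝 x, HasGradientAt f (g y) y)
    (hL : HasFDerivAt g L x) : L.IsPositive :=
  ⟨isSymmetric_of_hasFDerivAt_gradient hf hL,
    inner_nonneg_of_isLocalMin_of_hasFDerivAt_gradient hmin hf hL⟩

end Gradient

lemma exists_isLocalMin_sub_inner [ProperSpace E] {f : E → ℝ} {z₀ p : E} {r c : ℝ} (hr : 0 < r)
    (hf : ContinuousOn f (closedBall z₀ r)) (hsphere : ∀ x ∈ sphere z₀ r, f z₀ + c * r ≤ f x)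
    (hp : ‖p‖ < c) : ∃ x ∈ ball z₀ r, IsLocalMin (fun y => f y - ⟪p, y⟫) x := by
  refine exists_isLocalMin_mem_ball (by fun_prop) (mem_closedBall_self hr.le) fun x hx => ?_
  have hinner : ⟪p, x⟫ - ⟪p, z₀⟫ < c * r := calc
    ⟪p, x⟫ - ⟪p, z₀⟫ = ⟪p, x - z₀⟫ := (inner_sub_right p x z₀).symm
    _ ≤ ‖p‖ * ‖x - z₀‖ := real_inner_le_norm p (x - z₀)
    _ = ‖p‖ * r := by rw [mem_sphere_iff_norm.mp hx]
    _ < c * r := by gcongr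
  linarith [hsphere x hx]

section FiniteDimensional

variable [FiniteDimensional ℝ E] {F : E → ℝ} {G : E → E} {K : NNReal} {z₀ : E} {r c : ℝ}

lemma exists_isPositive_fderiv_gradient (hr : 0 < r) (hc : 0 < c)
    (hgrad : ∀ x ∈ closedBall z₀ r, HasGradientAt F (G x) x)
    (hlip : LipschitzOnWith K G (closedBall z₀ r))
    (hsphere : ∀ x ∈ sphere z₀ r, F z₀ + c * r ≤ F x) :
    ∃ x ∈ ball z₀ r, DifferentiableAt ℝ G x ∧ (fderiv ℝ G x).IsPositive := by
  borelize E
  obtain ⟨p, hp, hpN⟩ : ∃ p ∈ ball (0 : E) c,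
      p ∉ G '' {x ∈ closedBall z₀ r | ¬DifferentiableWithinAt ℝ G (closedBall z₀ r) x} := by
    by_contra! hsubset
    refine (measure_ball_pos μH[Module.finrank ℝ E] (0 : E) hc).ne' ?_
    exact measure_mono_null hsubset
      (hausdorffMeasure_image_setOf_not_differentiableWithinAt_eq_zero hlip hlip)
  obtain ⟨x, hx, hmin⟩ := exists_isLocalMin_sub_inner hr (HasGradientAt.continuousOn hgrad)
    hsphere (mem_ball_zero_iff.mp hp)
  have hnhds : closedBall z₀ r ∈ 𝓝 x := closedBall_mem_nhds_of_mem hx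
  have htilt : ∀ᶠ y in 𝓝 x, HasGradientAt (fun y => F y - ⟪p, y⟫) (G y - p) y := by
    filter_upwards [hnhds] with y hy using hasGradientAt_sub_inner (hgrad y hy) p
  have hGx : G x = p :=
    sub_eq_zero.mp (eq_zero_of_isLocalMin_of_hasGradientAt hmin htilt.self_of_nhds)
  have hdiff : DifferentiableAt ℝ G x := by
    by_contra hnot
    exact hpN ⟨x, ⟨ball_subset_closedBall hx, fun h => hnot (h.differentiableAt hnhds)⟩, hGx⟩
  exact ⟨x, hx, hdiff, isPositive_of_isLocalMin_of_hasFDerivAt_gradient hmin htilt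
    (hdiff.hasFDerivAt.sub_const p)⟩

lemma exists_isPositive_fderiv_gradient_add_smul {ε : ℝ} (hr : 0 < r) (hε : 0 < ε)
    (hgrad : ∀ x ∈ closedBall z₀ r, HasGradientAt F (G x) x)
    (hlip : LipschitzOnWith K G (closedBall z₀ r)) (hmin : ∀ x ∈ sphere z₀ r, F z₀ ≤ F x) :
    ∃ x ∈ ball z₀ r, DifferentiableAt ℝ G x ∧ (fderiv ℝ G x + ε • 1).IsPositive := by
  have hpert (x : E) : HasFDerivAt (fun y => ε • (y - z₀)) (ε • (1 : E →L[ℝ] E)) x :=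
    ((hasFDerivAt_id x).sub_const z₀).const_smul ε
  have hlip_pert : LipschitzWith ‖ε‖₊ fun y : E => ε • (y - z₀) :=
    .of_dist_le_mul fun x y => by simp [dist_smul₀]
  have hsphere : ∀ x ∈ sphere z₀ r,
      F z₀ + ε / 2 * ‖z₀ - z₀‖ ^ 2 + ε / 2 * r * r ≤ F x + ε / 2 * ‖x - z₀‖ ^ 2 := by
    intro x hx
    rw [mem_sphere_iff_norm.mp hx, sub_self, norm_zero]
    linarith [hmin x hx]
  obtain ⟨x, hx, hdiff, hpos⟩ := exists_isPositive_fderiv_gradient hr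
    (by positivity : 0 < ε / 2 * r)
    (fun x hx => hasGradientAt_add_half_mul_norm_sub_sq (hgrad x hx) ε z₀)
    (hlip.add hlip_pert.lipschitzOnWith) hsphere
  have hdiffG : DifferentiableAt ℝ G x := (hpert x).differentiableAt.add_iff_left.mp hdiff
  have hfderiv := (hdiffG.hasFDerivAt.add (hpert x)).fderiv
  exact ⟨x, hx, hdiffG, hfderiv ▸ hpos⟩

lemma exists_seq_isPositive_fderiv_gradient_add_smul {s : Set E} (hs : s ∈ 𝓝 z₀)
    (hgrad : ∀ x ∈ s, HasGradientAt F (G x) x) (hlip : LipschitzOnWith K G s)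
    (hmin : IsLocalMin F z₀) :
    ∃ z : ℕ → E, (∀ j, s ∈ 𝓝 (z j)) ∧ Tendsto z atTop (𝓝 z₀) ∧
      (∀ j, DifferentiableAt ℝ G (z j)) ∧
      ∀ j, (fderiv ℝ G (z j) + (1 / ((j : ℝ) + 1)) • 1).IsPositive := by
  obtain ⟨ρ, hρ, hball⟩ := nhds_basis_closedBall.mem_iff.mp (inter_mem hs hmin)
  have hcontact (j : ℕ) : ∃ x ∈ ball z₀ (min ρ (1 / ((j : ℝ) + 1))), DifferentiableAt ℝ G x ∧
      (fderiv ℝ G x + (1 / ((j : ℝ) + 1)) • 1).IsPositive := by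
    have hsub : closedBall z₀ (min ρ (1 / ((j : ℝ) + 1))) ⊆ s ∩ {x | F z₀ ≤ F x} :=
      (closedBall_subset_closedBall (min_le_left _ _)).trans hball
    exact exists_isPositive_fderiv_gradient_add_smul (by positivity) (by positivity)
      (fun x hx => hgrad x (hsub hx).1) (hlip.mono fun x hx => (hsub hx).1)
      (fun x hx => (hsub (sphere_subset_closedBall hx)).2)
  choose z hz hdiff hpos using hcontact
  refine ⟨z, fun j => ?_, ?_, hdiff, hpos⟩
  · have hzρ : z j ∈ ball z₀ ρ := ball_subset_ball (min_le_left _ _) (hz j)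
    exact mem_of_superset (closedBall_mem_nhds_of_mem hzρ) fun x hx => (hball hx).1
  · have hdist (j : ℕ) : dist (z j) z₀ ≤ 1 / ((j : ℝ) + 1) :=
      (mem_ball.mp (hz j)).le.trans (min_le_right _ _)
    exact tendsto_iff_dist_tendsto_zero.mpr (squeeze_zero (fun _ => dist_nonneg) hdist
      tendsto_one_div_add_atTop_nhds_zero_nat)

lemma exists_seq_tendsto_fderiv_gradient_isPositive {s : Set E} (hs : s ∈ 𝓝 z₀)
    (hgrad : ∀ x ∈ s, HasGradientAt F (G x) x) (hlip : LipschitzOnWith K G s)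
    (hmin : IsLocalMin F z₀) :
    ∃ (z : ℕ → E) (H₀ : E →L[ℝ] E), (∀ j, z j ∈ s) ∧ Tendsto z atTop (𝓝 z₀) ∧
      (∀ j, DifferentiableAt ℝ G (z j)) ∧
      Tendsto (fun j => fderiv ℝ G (z j)) atTop (𝓝 H₀) ∧ H₀.IsPositive := by
  obtain ⟨z, hzs, hz, hdiff, hpos⟩ :=
    exists_seq_isPositive_fderiv_gradient_add_smul hs hgrad hlip hmin
  have hbound (j : ℕ) : fderiv ℝ G (z j) ∈ closedBall 0 (K : ℝ) :=
    mem_closedBall_zero_iff.mpr (norm_fderiv_le_of_lipschitzOn ℝ (hzs j) hlip)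
  obtain ⟨H₀, -, ψ, hψ, hH₀⟩ := (isCompact_closedBall _ _).tendsto_subseq hbound
  refine ⟨z ∘ ψ, H₀, fun j => mem_of_mem_nhds (hzs _), hz.comp hψ.tendsto_atTop,
    fun j => hdiff _, hH₀, ?_⟩
  have hpert : Tendsto (fun j => (1 / ((ψ j : ℝ) + 1)) • (1 : E →L[ℝ] E)) atTop (𝓝 0) := by
    have hzero : Tendsto (fun j => 1 / ((ψ j : ℝ) + 1)) atTop (𝓝 0) :=
      tendsto_one_div_add_atTop_nhds_zero_nat.comp hψ.tendsto_atTop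
    simpa using hzero.smul_const (1 : E →L[ℝ] E)
  have hlim := hH₀.add hpert
  rw [add_zero] at hlim
  exact isClosed_setOf_isPositive.mem_of_tendsto hlim (.of_forall fun j => hpos (ψ j))

end FiniteDimensional

section Trace

variable {A H : E →L[ℝ] E}

lemma trace_comp_nonneg_of_isPositive [FiniteDimensional ℝ E] (hH : H.IsPositive)
    (hA : ∀ v, 0 ≤ ⟪A v, v⟫) : 0 ≤ LinearMap.trace ℝ E (H ∘L A) := by
  rw [LinearMap.trace_eq_sum_inner _ (hH.isSymmetric.eigenvectorBasis rfl)]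
  refine Finset.sum_nonneg fun k _ => ?_
  set e := hH.isSymmetric.eigenvectorBasis rfl k
  set eigval := hH.isSymmetric.eigenvalues rfl k
  have heigen : H e = eigval • e := hH.isSymmetric.apply_eigenvectorBasis rfl k
  calc
    0 ≤ eigval * ⟪A e, e⟫ :=
      mul_nonneg (hH.toLinearMap.nonneg_eigenvalues rfl k) (hA e)
    _ = ⟪H e, A e⟫ := by rw [heigen, real_inner_smul_left, real_inner_comm]
    _ = ⟪e, H (A e)⟫ := hH.inner_left_eq_inner_right e (A e)

lemma sum_inner_mul_inner_eq_trace_comp {ι : Type*} [Fintype ι] (b : OrthonormalBasis ι ℝ E)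
    (hH : (H : E →ₗ[ℝ] E).IsSymmetric) :
    ∑ i, ∑ l, ⟪A (b l), b i⟫ * ⟪H (b l), b i⟫ = LinearMap.trace ℝ E (H ∘L A) := by
  rw [LinearMap.trace_eq_sum_inner _ b, Finset.sum_comm]
  refine Finset.sum_congr rfl fun l _ => ?_
  calc
    ∑ i, ⟪A (b l), b i⟫ * ⟪H (b l), b i⟫ = ⟪A (b l), H (b l)⟫ := by
      simp only [← b.sum_inner_mul_inner (A (b l)) (H (b l)), real_inner_comm (H (b l))]
    _ = ⟪b l, H (A (b l))⟫ := by rw [real_inner_comm]; exact hH (b l) (A (b l))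

end Trace

theorem stmt_12_general {ι : Type*} [Fintype ι] [FiniteDimensional ℝ E]
    (b : OrthonormalBasis ι ℝ E) {U : Set E} {F : E → ℝ} {G : E → E} {z₀ : E}
    {a : E → E →L[ℝ] E} (hU : U ∈ 𝓝 z₀) (hgrad : ∀ x ∈ U, HasGradientAt F (G x) x)
    (hlip : ∃ s ∈ 𝓝 z₀, ∃ K, LipschitzOnWith K G s) (hmin : IsLocalMin F z₀)
    (ha : ContinuousAt a z₀) (ha_nonneg : ∀ v, 0 ≤ ⟪a z₀ v, v⟫) :
    ∃ (z : ℕ → E) (H : ℕ → E →L[ℝ] E),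
      (∀ j, z j ∈ U) ∧ Tendsto z atTop (𝓝 z₀) ∧ (∀ j, HasFDerivAt G (H j) (z j)) ∧
      0 ≤ liminf (fun j => ∑ i, ∑ l, ⟪a (z j) (b l), b i⟫ * ⟪H j (b l), b i⟫) atTop ∧
      Tendsto (fun j => G (z j)) atTop (𝓝 0) := by
  obtain ⟨s, hs, K, hK⟩ := hlip
  obtain ⟨z, H₀, hzU, hz, hdiff, hH₀, hpos⟩ := exists_seq_tendsto_fderiv_gradient_isPositive
    (inter_mem hU hs) (fun x hx => hgrad x hx.1) (hK.mono Set.inter_subset_right) hmin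
  refine ⟨z, fun j => fderiv ℝ G (z j), fun j => (hzU j).1, hz, fun j => (hdiff j).hasFDerivAt,
    ?_, ?_⟩
  · have hcont : Continuous fun p : (E →L[ℝ] E) × (E →L[ℝ] E) =>
        ∑ i, ∑ l, ⟪p.1 (b l), b i⟫ * ⟪p.2 (b l), b i⟫ := by fun_prop
    have hlim := (hcont.tendsto (a z₀, H₀)).comp ((ha.tendsto.comp hz).prodMk_nhds hH₀)
    refine (trace_comp_nonneg_of_isPositive hpos ha_nonneg).trans_eq ?_
    rw [← sum_inner_mul_inner_eq_trace_comp b hpos.isSymmetric]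
    exact hlim.liminf_eq.symm
  · have hGz₀ : G z₀ = 0 :=
      eq_zero_of_isLocalMin_of_hasGradientAt hmin (hgrad z₀ (mem_of_mem_nhds hU))
    exact hGz₀ ▸ (hK.continuousOn.continuousAt hs).tendsto.comp hz

end

theorem stmt_12 (n : ℕ) (hn : 1 ≤ n)
    (U : Set (EuclideanSpace ℝ (Fin n))) (hU : IsOpen U)
    (F : EuclideanSpace ℝ (Fin n) → ℝ)
    (G : EuclideanSpace ℝ (Fin n) → EuclideanSpace ℝ (Fin n))
    (hgrad : ∀ x ∈ U, HasGradientAt F (G x) x)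
    (hlip : ∀ x ∈ U, ∃ s ∈ nhds x, ∃ K, LipschitzOnWith K G s)
    (z₀ : EuclideanSpace ℝ (Fin n)) (hz₀ : z₀ ∈ U) (hmin : IsLocalMin F z₀)
    (a : EuclideanSpace ℝ (Fin n) → EuclideanSpace ℝ (Fin n) →L[ℝ] EuclideanSpace ℝ (Fin n))
    (ha : ContDiffOn ℝ 1 a U)
    (hasymm : ∀ x ∈ U, ∀ v w, ⟪a x v, w⟫ = ⟪v, a x w⟫)
    (hapos : ∀ v : EuclideanSpace ℝ (Fin n), v ≠ 0 → 0 < ⟪a z₀ v, v⟫) :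
    ∃ (z : ℕ → EuclideanSpace ℝ (Fin n))
      (H : ℕ → EuclideanSpace ℝ (Fin n) →L[ℝ] EuclideanSpace ℝ (Fin n)),
      (∀ j, z j ∈ U) ∧
      Tendsto z atTop (nhds z₀) ∧
      (∀ j, HasFDerivAt G (H j) (z j)) ∧
      0 ≤ liminf (fun j => ∑ i, ∑ l,
        ⟪a (z j) (EuclideanSpace.single l (1:ℝ)), EuclideanSpace.single i (1:ℝ)⟫ *
        ⟪H j (EuclideanSpace.single l (1:ℝ)), EuclideanSpace.single i (1:ℝ)⟫) atTop ∧
      Tendsto (fun j => G (z j)) atTop (nhds 0) := by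
  have ha_nonneg (v) : 0 ≤ ⟪a z₀ v, v⟫ := by
    rcases eq_or_ne v 0 with rfl | hv
    exacts [by simp, (hapos v hv).le]
  simpa only [EuclideanSpace.basisFun_apply] using stmt_12_general (EuclideanSpace.basisFun _ ℝ)
    (hU.mem_nhds hz₀) hgrad (hlip z₀ hz₀) hmin (ha.continuousOn.continuousAt (hU.mem_nhds hz₀))
    ha_nonneg
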